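/- arXiv:2011.11664 — 6 statements merged into one kernel-verified Lean document; each statement's English description precedes it below -/
import Mathlib

section
/- Assume ω is alternating and nondegenerate on A. Let T ⊆ B* be a subspace of the dual space of B and set A₀ := {a ∈ A : φ(ι(a)) = 0 for all φ ∈ T}. Assume A₀ ∩ A₀^⊥ω = {0}, and let V ⊆ C be a subspace with dim(A₀ ∩ u(V)) + 1 ≥ dim u(V). Then the subspace {φ ∘ ι : φ ∈ T and φ vanishes on V^⊥β} of the dual space A* has dimension at most 1. (Abstract form of the paper's Lemma [lm:proj-def]: up to purely relative deformations, the deformations inside an affine invariant manifold M supported on an equivalence class of M-parallel cylinders form a space of dimension at most 1. Here T abstracts the tangent space TM ⊆ H¹(X,z;ℂ); the hypothesis A₀ ∩ A₀^⊥ω = {0} abstracts the Avila–Eskin–Möller theorem that ι*(TM) is symplectic; and the dimension hypothesis abstracts the fact that the circumference curves spanning V are M-parallel.) -/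
open Module

/-- For a bilinear pairing `β : V × W → K` and a subspace `S ⊆ W`, the left perp
`S^⊥β = {v ∈ V : β(v, s) = 0 for all s ∈ S}`. -/
def perp {K V W : Type*} [Field K] [AddCommGroup V] [Module K V]
    [AddCommGroup W] [Module K W]
    (β : V →ₗ[K] W →ₗ[K] K) (S : Submodule K W) : Submodule K V where
  carrier := {v | ∀ s ∈ S, β v s = 0}
  add_mem' := by
    intro a b ha hb s hs
    simp [ha s hs, hb s hs]
  zero_mem' := by
    intro s hs
    simp
  smul_mem' := by
    intro c v hv s hs
    simp [hv s hs]

/-- Abstract form of Lemma `lm:proj-def`: assume `ω` is alternating and nondegenerate on `A`,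
`T ⊆ B*` is a subspace of the dual of `B`, `A₀ = {a ∈ A : φ(ι a) = 0 ∀ φ ∈ T}` satisfies
`A₀ ∩ A₀^⊥ω = 0`, and `V ⊆ C` satisfies `dim(A₀ ∩ u(V)) + 1 ≥ dim u(V)`.  Then the subspace
`{φ ∘ ι : φ ∈ T, φ vanishes on V^⊥β} ⊆ A*` has dimension at most `1`. -/
theorem proj_def_dim_le_one {K A B C : Type*} [Field K]
    [AddCommGroup A] [Module K A] [FiniteDimensional K A]
    [AddCommGroup B] [Module K B] [FiniteDimensional K B]
    [AddCommGroup C] [Module K C] [FiniteDimensional K C]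
    (ω : A →ₗ[K] A →ₗ[K] K) (β : B →ₗ[K] C →ₗ[K] K)
    (ι : A →ₗ[K] B) (u : C →ₗ[K] A)
    (hadj : ∀ (x : A) (v : C), β (ι x) v = ω x (u v))
    (halt : ∀ a : A, ω a a = 0)
    (hnd : ∀ a : A, (∀ a' : A, ω a a' = 0) → a = 0)
    (T : Submodule K (Module.Dual K B))
    (A₀ : Submodule K A)
    (hA₀ : ∀ a : A, a ∈ A₀ ↔ ∀ φ ∈ T, φ (ι a) = 0)
    (hsymp : A₀ ⊓ perp ω A₀ = ⊥)
    (V : Submodule K C)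
    (hV : finrank K ↥(A₀ ⊓ Submodule.map u V) + 1 ≥ finrank K ↥(Submodule.map u V)) :
    finrank K ↥(Submodule.map ι.dualMap (T ⊓ (perp β V).dualAnnihilator)) ≤ 1 := by
  set U := Submodule.map u V with hU
  have hle : Submodule.map ι.dualMap (T ⊓ (perp β V).dualAnnihilator)
      ≤ Submodule.map ω.flip (perp ω A₀ ⊓ U) := by
    rintro _ ⟨φ, ⟨hφT, hφ⟩, rfl⟩
    have hp : perp β V = (Submodule.map β.flip V).dualCoannihilator := by
      ext b
      rw [Submodule.mem_dualCoannihilator]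
      constructor
      · rintro h _ ⟨v, hv, rfl⟩
        exact h v hv
      · intro h v hv
        exact h _ ⟨v, hv, rfl⟩
    have hφ' : φ ∈ (perp β V).dualAnnihilator := hφ
    rw [hp, Subspace.dualCoannihilator_dualAnnihilator_eq] at hφ'
    obtain ⟨v, hv, rfl⟩ := hφ'
    refine ⟨u v, ⟨?_, ⟨v, hv, rfl⟩⟩, ?_⟩
    · intro a ha
      have h1 : ω a (u v) = 0 := by
        rw [← hadj]
        exact (hA₀ a).1 ha _ hφT
      have h2 := halt (a + u v)
      simp only [map_add, LinearMap.add_apply, halt, h1] at h2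
      simpa using h2
    · ext x
      exact (hadj x v).symm
  have h1 := Submodule.finrank_mono hle
  have h2 := Submodule.finrank_map_le ω.flip (perp ω A₀ ⊓ U)
  have h3 := Submodule.finrank_sup_add_finrank_inf_eq (A₀ ⊓ U) (perp ω A₀ ⊓ U)
  have h4 : (A₀ ⊓ U) ⊓ (perp ω A₀ ⊓ U) = ⊥ := by
    rw [eq_bot_iff, ← hsymp]
    exact inf_le_inf inf_le_left inf_le_left
  have h5 : finrank K ↥((A₀ ⊓ U) ⊔ (perp ω A₀ ⊓ U)) ≤ finrank K U :=
    Submodule.finrank_mono (sup_le inf_le_right inf_le_right)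
  rw [h4, finrank_bot] at h3
  have h6 := h1.trans h2
  refine h6.trans ?_
  omega
end

section
/- Suppose the vectors F_1, …, F_m span a subspace N ⊆ (n → K) and have pivots p_1, …, p_m such that p_l ∈ H whenever supp_H(F_l) ≠ ∅. Then the equivalence relation on H generated by the relation 'e and e′ both lie in some N-primitive subset of H' coincides with the equivalence relation on H generated by the relation 'e and e′ both lie in supp_H(F_l) for some l = 1, …, m'. (Abstract form of the paper's Lemma [lm:Mrref]: two horizontal nodes are M-cross-related if and only if they are rref-cross-related with respect to the reduced row echelon basis of defining equations.) -/
/-- The set `supp_H(F) = {h ∈ H : F h ≠ 0}` of elements of `H` "crossed" by `F`. -/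
def suppH {K n : Type*} [Field K] (H : Set n) (F : n → K) : Set n :=
  {h | h ∈ H ∧ F h ≠ 0}

/-- A nonempty set `S ⊆ H` is `N`-correlated if `S = supp_H(F)` for some `F ∈ N`. -/
def Correlated {K n : Type*} [Field K] (N : Submodule K (n → K)) (H : Set n)
    (S : Set n) : Prop :=
  S.Nonempty ∧ ∃ F ∈ N, S = suppH H F

/-- An `N`-correlated set is `N`-primitive if no nonempty proper subset is `N`-correlated. -/
def Primitive {K n : Type*} [Field K] (N : Submodule K (n → K)) (H : Set n)
    (S : Set n) : Prop :=
  Correlated N H S ∧ ∀ S' : Set n, S' ⊂ S → S'.Nonempty → ¬ Correlated N H S'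

/-- Abstract form of Lemma `lm:Mrref`: if `F_1, …, F_m` span `N` and have pivots
`p_1, …, p_m` with `p_l ∈ H` whenever `supp_H(F_l) ≠ ∅`, then the equivalence relation on `H`
generated by "both lie in some `N`-primitive subset of `H`" coincides with the equivalence
relation generated by "both lie in `supp_H(F_l)` for some `l`". -/
theorem crossRelated_iff_rrefCrossRelated {K n : Type*} [Field K] [Fintype n]
    (H : Set n) {m : ℕ}
    (F : Fin m → (n → K)) (p : Fin m → n)
    (hpiv : ∀ l, F l (p l) ≠ 0)
    (hpiv' : ∀ k l, k ≠ l → F k (p l) = 0)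
    (N : Submodule K (n → K))
    (hN : N = Submodule.span K (Set.range F))
    (hpH : ∀ l, (suppH H (F l)).Nonempty → p l ∈ H) :
    ∀ e e' : n,
      Relation.EqvGen (fun a b => ∃ S : Set n, Primitive N H S ∧ a ∈ S ∧ b ∈ S) e e' ↔
      Relation.EqvGen (fun a b => ∃ l, a ∈ suppH H (F l) ∧ b ∈ suppH H (F l)) e e' := by
  classical
  have hmem : ∀ G : n → K, G ∈ N ↔ ∃ c : Fin m → K, ∑ i, c i • F i = G := by
    intro G
    rw [hN]
    exact Submodule.mem_span_range_iff_exists_fun K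
  intro e e'
  constructor
  · intro h
    induction h with
    | refl x => exact Relation.EqvGen.refl x
    | symm x y _ ih => exact Relation.EqvGen.symm _ _ ih
    | trans x y z _ _ ih1 ih2 => exact Relation.EqvGen.trans _ _ _ ih1 ih2
    | rel a b hab =>
      obtain ⟨S, ⟨⟨_, G, hG, rfl⟩, hmin⟩, ha, hb⟩ := hab
      by_contra hcon
      set R : n → n → Prop :=
        Relation.EqvGen (fun a b => ∃ l, a ∈ suppH H (F l) ∧ b ∈ suppH H (F l)) with hR
      obtain ⟨c, rfl⟩ := (hmem _).1 hG
      set d : Fin m → K := fun k => if ∃ h ∈ suppH H (F k), R a h then c k else 0 with hd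
      have h1 : ∀ h ∈ H, R a h → (∑ i, d i • F i) h = (∑ i, c i • F i) h := by
        intro h hh hah
        simp only [Finset.sum_apply, Pi.smul_apply, smul_eq_mul]
        refine Finset.sum_congr rfl fun k _ => ?_
        by_cases hk : F k h = 0
        · simp [hk]
        · have : ∃ h ∈ suppH H (F k), R a h := ⟨h, ⟨hh, hk⟩, hah⟩
          simp only [hd, if_pos this]
      have h2 : ∀ h ∈ H, ¬ R a h → (∑ i, d i • F i) h = 0 := by
        intro h hh hah
        simp only [Finset.sum_apply, Pi.smul_apply, smul_eq_mul]
        refine Finset.sum_eq_zero fun k _ => ?_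
        by_cases hk : F k h = 0
        · simp [hk]
        · have : ¬ ∃ h ∈ suppH H (F k), R a h := by
            rintro ⟨g, hg, hag⟩
            exact hah (Relation.EqvGen.trans _ _ _ hag
              (Relation.EqvGen.rel _ _ ⟨k, hg, hh, hk⟩))
          simp only [hd, if_neg this, zero_mul]
      have haa : a ∈ suppH H (∑ i, d i • F i) :=
        ⟨ha.1, by rw [h1 a ha.1 (Relation.EqvGen.refl a)]; exact ha.2⟩
      refine hmin (suppH H (∑ i, d i • F i)) ⟨?_, ?_⟩ ⟨a, haa⟩
        ⟨⟨a, haa⟩, _, (hmem _).2 ⟨d, rfl⟩, rfl⟩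
      · rintro h ⟨hh, hne⟩
        by_cases hah : R a h
        · exact ⟨hh, by rw [← h1 h hh hah]; exact hne⟩
        · exact absurd (h2 h hh hah) hne
      · intro hsub
        exact (hsub hb).2 (h2 b hb.1 hcon)
  · refine Relation.EqvGen.mono ?_ e e'
    rintro a b ⟨l, ha, hb⟩
    refine ⟨suppH H (F l), ⟨⟨⟨a, ha⟩, F l, ?_, rfl⟩, ?_⟩, ha, hb⟩
    · rw [hN]
      exact Submodule.subset_span ⟨l, rfl⟩
    · rintro S' ⟨hsub, hnsub⟩ ⟨g, hg⟩ ⟨_, G, hG, rfl⟩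
      obtain ⟨c, rfl⟩ := (hmem _).1 hG
      have key : ∀ h ∈ H, (∑ i, c i • F i) h = c l * F l h := by
        intro h hh
        simp only [Finset.sum_apply, Pi.smul_apply, smul_eq_mul]
        refine Finset.sum_eq_single l (fun k _ hkl => ?_) (by simp)
        by_cases hk : F k h = 0
        · simp [hk]
        · have hpk : p k ∈ H := hpH k ⟨h, hh, hk⟩
          have hval : (∑ i, c i • F i) (p k) = c k * F k (p k) := by
            simp only [Finset.sum_apply, Pi.smul_apply, smul_eq_mul]
            refine Finset.sum_eq_single k (fun j _ hjk => ?_) (by simp)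
            rw [hpiv' j k hjk, mul_zero]
          have hck : c k = 0 := by
            by_contra hne
            have : p k ∈ suppH H (F l) :=
              hsub ⟨hpk, by rw [hval]; exact mul_ne_zero hne (hpiv k)⟩
            exact this.2 (hpiv' l k (Ne.symm hkl))
          rw [hck, zero_mul]
      have hcl : c l ≠ 0 := by
        intro h0
        apply hg.2
        rw [key g hg.1, h0, zero_mul]
      apply hnsub
      rintro h ⟨hh, hne⟩
      exact ⟨hh, by rw [key h hh]; exact mul_ne_zero hcl hne⟩
end

section
/- Suppose the vectors F_1, …, F_m span a subspace N ⊆ (n → K) and have pivots p_1, …, p_m such that p_l ∈ H whenever supp_H(F_l) ≠ ∅. Then for every j there is no F ∈ N with ∅ ≠ supp_H(F) ⊊ supp_H(F_j); in particular every nonempty set supp_H(F_j) is N-primitive. (First claim in the proof of the paper's Lemma [lm:Mrref]: the set of horizontal nodes crossed by an element of the rref basis of defining equations is M-primitive.) -/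
/-- First claim in the proof of Lemma `lm:Mrref`: if `F_1, …, F_m` span `N` and have pivots
`p_1, …, p_m` with `p_l ∈ H` whenever `supp_H(F_l) ≠ ∅`, then for every `j` there is no
`F ∈ N` with `∅ ≠ supp_H(F) ⊊ supp_H(F_j)`; in particular every nonempty `supp_H(F_j)` is
`N`-primitive. -/
theorem rref_supp_primitive {K n : Type*} [Field K] [Fintype n]
    (H : Set n) {m : ℕ}
    (F : Fin m → (n → K)) (p : Fin m → n)
    (hpiv : ∀ l, F l (p l) ≠ 0)
    (hpiv' : ∀ k l, k ≠ l → F k (p l) = 0)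
    (N : Submodule K (n → K))
    (hN : N = Submodule.span K (Set.range F))
    (hpH : ∀ l, (suppH H (F l)).Nonempty → p l ∈ H) :
    (∀ j : Fin m, ¬ ∃ F' ∈ N, (suppH H F').Nonempty ∧ suppH H F' ⊂ suppH H (F j)) ∧
    (∀ j : Fin m, (suppH H (F j)).Nonempty → Primitive N H (suppH H (F j))) := by
  have key : ∀ j : Fin m, ¬ ∃ F' ∈ N, (suppH H F').Nonempty ∧
      suppH H F' ⊂ suppH H (F j) := by
    rintro j ⟨F', hF', ⟨x, hxH, hx⟩, hss⟩
    rw [hN, Submodule.mem_span_range_iff_exists_fun] at hF'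
    obtain ⟨c, rfl⟩ := hF'
    have hval : ∀ k, (∑ i, c i • F i) (p k) = c k * F k (p k) := by
      intro k
      rw [Finset.sum_apply, Finset.sum_eq_single k]
      · simp
      · intro b _ hb
        simp [hpiv' b k hb]
      · simp
    have hck : ∀ k, k ≠ j → (suppH H (F k)).Nonempty → c k = 0 := by
      intro k hk hne
      by_contra hc
      have hmem : p k ∈ suppH H (∑ i, c i • F i) :=
        ⟨hpH k hne, by rw [hval]; exact mul_ne_zero hc (hpiv k)⟩
      exact (hss.1 hmem).2 (hpiv' j k hk.symm)
    have hH : ∀ h ∈ H, (∑ i, c i • F i) h = c j * F j h := by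
      intro h hh
      rw [Finset.sum_apply, Finset.sum_eq_single j]
      · simp
      · intro b _ hb
        by_cases hz : F b h = 0
        · simp [hz]
        · simp [hck b hb ⟨h, hh, hz⟩]
      · simp
    have hcj : c j ≠ 0 := by
      intro h0
      apply hx
      rw [hH x hxH, h0, zero_mul]
    apply hss.2
    rintro h ⟨hh, hne⟩
    exact ⟨hh, by rw [hH h hh]; exact mul_ne_zero hcj hne⟩
  refine ⟨key, fun j hj => ⟨⟨hj, F j, ?_, rfl⟩, ?_⟩⟩
  · rw [hN]
    exact Submodule.subset_span ⟨j, rfl⟩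
  · rintro S' hS' hne ⟨_, G, hG, rfl⟩
    exact key j ⟨G, hG, hne, hS'⟩
end

section
/- Let c ≥ 1 and let F_1, …, F_c be vectors in (n → K) having pivots p_1, …, p_c with every p_j ∈ H. Suppose that supp_H(F_j) has at least 2 elements for every j, and that H has exactly c + 1 elements. Then for every pair of distinct elements e_1, e_2 ∈ H there exists a vector G in the linear span of F_1, …, F_c with supp_H(G) = {e_1, e_2}. (Combinatorial core of the final assertion of Theorem 1.1 [thm:divisorial]: for a divisorial boundary stratum with only horizontal nodes, every pair of nodes is crossed by a defining equation that crosses exactly that pair of nodes.) -/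
/-- Combinatorial core of the final assertion of Theorem `thm:divisorial`: let `c ≥ 1` and let
`F_1, …, F_c` have pivots `p_1, …, p_c` all lying in `H`, with `|supp_H(F_j)| ≥ 2` for every
`j` and `|H| = c + 1`.  Then every pair of distinct `e₁, e₂ ∈ H` equals `supp_H(G)` for some
`G` in the span of the `F_j`. -/
theorem exists_eq_pair_supp {K n : Type*} [Field K] [Fintype n]
    (H : Set n) {c : ℕ} (hc : 1 ≤ c)
    (F : Fin c → (n → K)) (p : Fin c → n)
    (hpiv : ∀ l, F l (p l) ≠ 0)
    (hpiv' : ∀ k l, k ≠ l → F k (p l) = 0)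
    (hpH : ∀ j, p j ∈ H)
    (hsupp : ∀ j, 2 ≤ (suppH H (F j)).ncard)
    (hH : H.ncard = c + 1) :
    ∀ e₁ ∈ H, ∀ e₂ ∈ H, e₁ ≠ e₂ →
      ∃ G ∈ Submodule.span K (Set.range F), suppH H G = {e₁, e₂} := by
  have pinj : Function.Injective p := by
    intro a b hab
    by_contra hne
    exact hpiv a (by rw [hab]; exact hpiv' a b hne)
  have hr : (Set.range p).ncard = c := by
    rw [← Set.image_univ, Set.ncard_image_of_injective _ pinj]
    simp
  have hsub : Set.range p ⊆ H := by
    rintro _ ⟨j, rfl⟩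
    exact hpH j
  have hd : (H \ Set.range p).ncard = 1 := by
    rw [Set.ncard_sdiff hsub, hr, hH]
    omega
  obtain ⟨q, hq⟩ := Set.ncard_eq_one.mp hd
  have hqm : q ∈ H \ Set.range p := by rw [hq]; rfl
  have hcase : ∀ h ∈ H, h = q ∨ ∃ j, h = p j := by
    intro h hh
    by_cases hm : h ∈ Set.range p
    · obtain ⟨j, rfl⟩ := hm
      exact Or.inr ⟨j, rfl⟩
    · left
      have : h ∈ H \ Set.range p := ⟨hh, hm⟩
      rw [hq] at this
      exact this
  have hpq : ∀ j, p j ≠ q := fun j hj => hqm.2 ⟨j, hj⟩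
  have hFq : ∀ j, F j q ≠ 0 := by
    intro j h0
    have hs : suppH H (F j) ⊆ {p j} := by
      rintro h ⟨hh, hne⟩
      rcases hcase h hh with rfl | ⟨k, rfl⟩
      · exact absurd h0 hne
      · by_cases hjk : j = k
        · subst hjk; rfl
        · exact absurd (hpiv' j k hjk) hne
    have h1 := Set.ncard_le_ncard hs
    have h2 := hsupp j
    rw [Set.ncard_singleton] at h1
    omega
  have hmem : ∀ j, F j ∈ Submodule.span K (Set.range F) :=
    fun j => Submodule.subset_span ⟨j, rfl⟩
  have hone : ∀ j, suppH H (F j) = {p j, q} := by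
    intro j
    ext h
    constructor
    · rintro ⟨hh, hne⟩
      rcases hcase h hh with rfl | ⟨k, rfl⟩
      · exact Or.inr rfl
      · by_cases hjk : j = k
        · subst hjk; exact Or.inl rfl
        · exact absurd (hpiv' j k hjk) hne
    · rintro (rfl | rfl)
      · exact ⟨hpH j, hpiv j⟩
      · exact ⟨hqm.1, hFq j⟩
  intro e₁ h₁ e₂ h₂ hne
  rcases hcase e₁ h₁ with rfl | ⟨i, rfl⟩
  · rcases hcase e₂ h₂ with rfl | ⟨j, rfl⟩
    · exact absurd rfl hne
    · exact ⟨F j, hmem j, by rw [hone, Set.pair_comm]⟩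
  · rcases hcase e₂ h₂ with rfl | ⟨j, rfl⟩
    · exact ⟨F i, hmem i, hone i⟩
    · have hij : i ≠ j := fun h => hne (by rw [h])
      refine ⟨F j q • F i - F i q • F j,
        Submodule.sub_mem _ (Submodule.smul_mem _ _ (hmem i))
          (Submodule.smul_mem _ _ (hmem j)), ?_⟩
      ext h
      constructor
      · rintro ⟨hh, hn⟩
        rcases hcase h hh with rfl | ⟨k, rfl⟩
        · exact absurd (by simp [mul_comm]) hn
        · by_cases hik : i = k
          · subst hik; exact Or.inl rfl
          · by_cases hjk : j = k
            · subst hjk; exact Or.inr rfl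
            · exact absurd (by simp [hpiv' i k hik, hpiv' j k hjk]) hn
      · rintro (rfl | rfl)
        · exact ⟨h₁, by simp [hpiv' j i hij.symm, hpiv i, hFq j]⟩
        · exact ⟨h₂, by simp [hpiv' i j hij, hpiv j, hFq i]⟩
end

section
/- Let c ≥ 1 and let F_1, …, F_c be vectors in (n → K) having pivots p_1, …, p_c with every p_j ∈ H, and suppose that supp_H(F_j) has at least 2 elements for every j. Then the union ⋃_{j=1}^{c} supp_H(F_j) has at least c + 1 elements. (Step in the proof of Theorem 1.1 [thm:divisorial]: since every lost defining equation crosses at least two horizontal nodes and the pivots are distinct horizontal nodes, either H(Γ′) = 0 or c(Γ′) ≤ H(Γ′) − 1.) -/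
/-- Step in the proof of Theorem `thm:divisorial`: if `c ≥ 1` and `F_1, …, F_c` have pivots
`p_1, …, p_c` all lying in `H`, with `|supp_H(F_j)| ≥ 2` for every `j`, then the union
`⋃ⱼ supp_H(F_j)` has at least `c + 1` elements. -/
theorem card_union_supp_ge {K n : Type*} [Field K] [Fintype n]
    (H : Set n) {c : ℕ} (hc : 1 ≤ c)
    (F : Fin c → (n → K)) (p : Fin c → n)
    (hpiv : ∀ l, F l (p l) ≠ 0)
    (hpiv' : ∀ k l, k ≠ l → F k (p l) = 0)
    (hpH : ∀ j, p j ∈ H)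
    (hsupp : ∀ j, 2 ≤ (suppH H (F j)).ncard) :
    c + 1 ≤ (⋃ j, suppH H (F j)).ncard := by
  obtain ⟨x, hx, hne⟩ := Set.exists_ne_of_one_lt_ncard (hsupp ⟨0, hc⟩) (p ⟨0, hc⟩)
  have hinj : Function.Injective p := by
    intro a b hab
    by_contra h
    exact hpiv a (hab ▸ hpiv' a b h)
  have hxr : x ∉ Set.range p := by
    rintro ⟨j, rfl⟩
    by_cases h : (⟨0, hc⟩ : Fin c) = j
    · exact hne (by rw [h])
    · exact hx.2 (hpiv' _ _ h)
  have hcard : (insert x (Set.range p)).ncard = c + 1 := by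
    rw [Set.ncard_insert_of_notMem hxr (Set.toFinite _), ← Set.image_univ,
      Set.ncard_image_of_injective _ hinj, Set.ncard_univ, Nat.card_fin]
  rw [← hcard]
  apply Set.ncard_le_ncard _ (Set.toFinite _)
  rintro y (rfl | ⟨j, rfl⟩)
  · exact Set.mem_iUnion.2 ⟨_, hx⟩
  · exact Set.mem_iUnion.2 ⟨j, hpH j, hpiv j⟩
end

section
/- Let S ⊆ I be a subset, and suppose a vector F satisfies: (i) F lies in the linear span of {λ(a) : a ∈ S}; and (ii) F is a finite sum of elements of N, each of which lies in the linear span of {λ(a), λ(b)} for some pair of indices a, b ∈ I. Then F is a finite sum of elements of N, each of which lies in the linear span of {λ(a), λ(b)} for some pair of indices a, b ∈ S. (Linear-algebra core of the paper's Proposition [prop:pairwise-circum]: a defining equation of an affine invariant manifold in the minimal stratum that is a linear combination of the horizontal vanishing cycles λ_i with i ∈ S, and is a sum of pairwise-proportionality defining equations b λ_j + c λ_l, is in fact a sum of pairwise-proportionality defining equations involving only vanishing cycles indexed by S.) -/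
/-- Linear-algebra core of Proposition `prop:pairwise-circum`: let `lam : I → V` be a linearly
independent family, `N ⊆ V` a subspace and `S ⊆ I`.  If `F` lies in the span of
`{lam a : a ∈ S}` and `F` is a finite sum of elements of `N`, each lying in the span of
`{lam a, lam b}` for some `a, b ∈ I`, then `F` is a finite sum of elements of `N`, each lying
in the span of `{lam a, lam b}` for some `a, b ∈ S`. -/
theorem sum_of_pairwise_in_S {K V I : Type*} [Field K] [AddCommGroup V] [Module K V]
    (lam : I → V) (hlam : LinearIndependent K lam)
    (N : Submodule K V) (S : Set I) (F : V)
    (hF : F ∈ Submodule.span K (lam '' S))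
    (hsum : ∃ (m : ℕ) (g : Fin m → V),
      (∀ i, g i ∈ N ∧ ∃ a b : I, g i ∈ Submodule.span K {lam a, lam b}) ∧
      F = ∑ i, g i) :
    ∃ (m : ℕ) (g : Fin m → V),
      (∀ i, g i ∈ N ∧ ∃ a ∈ S, ∃ b ∈ S, g i ∈ Submodule.span K {lam a, lam b}) ∧
      F = ∑ i, g i := by
  classical
  obtain ⟨m, g, hg, hFg⟩ := hsum
  rcases S.eq_empty_or_nonempty with rfl | ⟨s0, hs0⟩
  · refine ⟨0, fun _ => 0, fun i => i.elim0, ?_⟩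
    simpa using hF
  -- a retraction of the index vectors onto multiples of vectors indexed by `S`
  have hex : ∀ a : I, ∃ v : V, (a ∈ S → v = lam a) ∧ (∃ s ∈ S, ∃ c : K, v = c • lam s) ∧
      (lam a - v ∈ N ∨ (v = 0 ∧ ∀ s ∈ S, ∀ c : K, lam a - c • lam s ∉ N)) := by
    intro a
    by_cases ha : a ∈ S
    · exact ⟨lam a, fun _ => rfl, ⟨a, ha, 1, by simp⟩, Or.inl (by simp)⟩
    by_cases h : ∃ s ∈ S, ∃ c : K, lam a - c • lam s ∈ N
    · obtain ⟨s, hs, c, hc⟩ := h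
      exact ⟨c • lam s, fun h => absurd h ha, ⟨s, hs, c, rfl⟩, Or.inl hc⟩
    · push Not at h
      exact ⟨0, fun h => absurd h ha, ⟨s0, hs0, 0, by simp⟩, Or.inr ⟨rfl, h⟩⟩
  choose f hfS hfm hfN using hex
  obtain ⟨φ, hφ⟩ : ∃ φ : V →ₗ[K] V, ∀ a, φ (lam a) = f a := by
    obtain ⟨φ, h⟩ := LinearMap.exists_extend ((Module.Basis.span hlam).constr K f)
    refine ⟨φ, fun a => ?_⟩
    have h1 := LinearMap.congr_fun h (Module.Basis.span hlam a)
    rw [Module.Basis.constr_basis] at h1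
    simpa [Module.Basis.span_apply] using h1
  have hφF : φ F = F := by
    have : Set.EqOn φ (LinearMap.id : V →ₗ[K] V) (lam '' S) := by
      rintro _ ⟨a, ha, rfl⟩
      simp [hφ, hfS a ha]
    exact LinearMap.eqOn_span this hF
  -- a pairwise relation between a good and a bad index only involves the good one
  have key : ∀ (a b : I) (x y : K), x • lam a + y • lam b ∈ N → lam a - f a ∈ N →
      (∀ s ∈ S, ∀ c : K, lam b - c • lam s ∉ N) → x • f a ∈ N := by
    intro a b x y h ha hb
    by_cases hy : y = 0
    · subst hy
      have := N.sub_mem h (N.smul_mem x ha)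
      convert this using 1
      module
    · exfalso
      obtain ⟨s, hs, c, hc⟩ := hfm a
      apply hb s hs (-(y⁻¹ * x * c))
      have := N.smul_mem y⁻¹ (N.sub_mem h (N.smul_mem x ha))
      rw [hc] at this
      convert this using 1
      simp only [smul_add, smul_sub, smul_smul, inv_mul_cancel₀ hy]
      module
  refine ⟨m, fun i => φ (g i), fun i => ?_, by rw [← map_sum, ← hFg, hφF]⟩
  obtain ⟨hN, a, b, hab⟩ := hg i
  obtain ⟨x, y, hxy⟩ := Submodule.mem_span_pair.1 hab
  have hφg : φ (g i) = x • f a + y • f b := by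
    rw [← hxy, map_add, map_smul, map_smul, hφ, hφ]
  rw [← hxy] at hN
  constructor
  · change φ (g i) ∈ N
    rw [hφg]
    rcases hfN a with ha | ⟨ha0, ha⟩ <;> rcases hfN b with hb | ⟨hb0, hb⟩
    · have := N.sub_mem (N.sub_mem hN (N.smul_mem x ha)) (N.smul_mem y hb)
      convert this using 1
      module
    · simpa [hb0] using key a b x y hN ha hb
    · simpa [ha0] using key b a y x (by rwa [add_comm]) hb ha
    · simp [ha0, hb0]
  · obtain ⟨s, hs, c, hc⟩ := hfm a
    obtain ⟨t, ht, d, hd⟩ := hfm b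
    refine ⟨s, hs, t, ht, Submodule.mem_span_pair.2 ⟨x * c, y * d, ?_⟩⟩
    beta_reduce
    rw [hφg, hc, hd, smul_smul, smul_smul]
end
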